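/- Let G be a complete multipartite graph with parts I_1, …, I_m such that |I_i| < |V(G) \ I_i| for every i. Then G has an almost-perfect matching, i.e. a matching covering every vertex of G except at most one. -/

import Mathlib

/-- A finite set of edges of `G` forming a matching (pairwise disjoint edges). -/
def IsMatchingFinset {V : Type} (G : SimpleGraph V) (M : Finset (Sym2 V)) : Prop :=
  (∀ e ∈ M, e ∈ G.edgeSet) ∧
    ∀ e ∈ M, ∀ f ∈ M, e ≠ f → ∀ v, v ∈ e → v ∉ f

/-!
List the `n` vertices part by part and join the vertex in position `i` to the one in position
`i + ⌈n / 2⌉`, for `i < ⌊n / 2⌋`. A part containing both would occupy at least `⌈n / 2⌉ + 1`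
consecutive positions, so each of these pairs is an edge, and the only position left out is
`⌊n / 2⌋` when `n` is odd.
-/

open Finset

theorem exists_equiv_fin_ordConnected_fibers {V α : Type*} [Fintype V] (f : V → α) :
    ∃ e : Fin (Fintype.card V) ≃ V, ∀ a, ((f ∘ e) ⁻¹' {a}).OrdConnected := by
  obtain ⟨_, _⟩ := exists_wellFoundedLT α
  let e₀ := (Fintype.equivFin V).symm
  refine ⟨(Tuple.sort (f ∘ e₀)).trans e₀, fun a => ?_⟩
  exact Set.ordConnected_singleton.preimage_mono (Tuple.monotone_sort (f ∘ e₀))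

theorem lt_add_card_of_ordConnected {n : ℕ} {s : Finset (Fin n)}
    (hs : (s : Set (Fin n)).OrdConnected) {i j : Fin n} (hi : i ∈ s) (hj : j ∈ s) :
    (j : ℕ) < i + #s := by
  have hsub : Icc i j ⊆ s := by
    rw [← coe_subset, coe_Icc]
    exact hs.out hi hj
  have hcard : (j : ℕ) + 1 - i ≤ #s := Fin.card_Icc i j ▸ card_le_card hsub
  have : 0 < #s := card_pos.mpr ⟨i, hi⟩
  omega

theorem isMatchingFinset_image_mk {V : Type} {ι : Type*} [DecidableEq V] [Fintype ι]
    {G : SimpleGraph V} {a b : ι → V} (hadj : ∀ i, G.Adj (a i) (b i))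
    (ha : a.Injective) (hb : b.Injective) (hab : ∀ i j, a i ≠ b j) :
    IsMatchingFinset G (univ.image fun i => s(a i, b i)) := by
  refine ⟨by simpa using hadj, ?_⟩
  simp only [mem_image, mem_univ, true_and, forall_exists_index, forall_apply_eq_imp_iff]
  intro i j hij v hvi hvj
  suffices i = j from hij (this ▸ rfl)
  rcases Sym2.mem_iff.mp hvi with rfl | rfl <;> rcases Sym2.mem_iff.mp hvj with h | h
  · exact ha h
  · exact absurd h (hab i j)
  · exact absurd h.symm (hab j i)
  · exact hb h

theorem exists_almostPerfectMatching_of_adj_half_shift {V : Type} {G : SimpleGraph V} {n : ℕ}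
    (e : Fin n ≃ V) (hadj : ∀ i j : Fin n, (j : ℕ) = i + (n + 1) / 2 → G.Adj (e i) (e j)) :
    ∃ M : Finset (Sym2 V), IsMatchingFinset G M ∧ {v | ∀ d ∈ M, v ∉ d}.Subsingleton := by
  classical
  let lower (i : Fin (n / 2)) : Fin n := ⟨i, by omega⟩
  let upper (i : Fin (n / 2)) : Fin n := ⟨i + (n + 1) / 2, by omega⟩
  let M : Finset (Sym2 V) := univ.image fun i => s(e (lower i), e (upper i))
  have hM : IsMatchingFinset G M := by
    refine isMatchingFinset_image_mk (fun i => hadj _ _ rfl) ?_ ?_ ?_ <;> intro i j h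
    all_goals simp only [e.injective.eq_iff, lower, upper, Fin.mk.injEq] at h; omega
  have uncovered : ∀ p : Fin n, (∀ d ∈ M, e p ∉ d) → (p : ℕ) = n / 2 := by
    intro p hp
    have hne (i : Fin (n / 2)) : p ≠ lower i ∧ p ≠ upper i := by
      simpa using hp _ (mem_image_of_mem _ (mem_univ i))
    have not_lower : ¬ (p : ℕ) < n / 2 := fun h => (hne ⟨p, h⟩).1 rfl
    have not_upper : ¬ (n + 1) / 2 ≤ (p : ℕ) := fun h =>
      (hne ⟨p - (n + 1) / 2, by omega⟩).2 (Fin.ext (Nat.sub_add_cancel h).symm)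
    omega
  refine ⟨M, hM, e.surjective.forall.mpr fun p hp => e.surjective.forall.mpr fun q hq => ?_⟩
  exact congrArg e (Fin.ext ((uncovered p hp).trans (uncovered q hq).symm))

theorem completeMultipartite_almostPerfectMatching_general {V : Type} {α : Type*}
    [Fintype V] [DecidableEq α] (G : SimpleGraph V) (f : V → α)
    (hadj : ∀ u v, f u ≠ f v → G.Adj u v)
    (hbal : ∀ a, 2 * #{v | f v = a} ≤ Fintype.card V + 1) :
    ∃ M : Finset (Sym2 V), IsMatchingFinset G M ∧ {v | ∀ e ∈ M, v ∉ e}.Subsingleton := by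
  obtain ⟨e, he⟩ := exists_equiv_fin_ordConnected_fibers f
  refine exists_almostPerfectMatching_of_adj_half_shift e fun i j hij => hadj _ _ fun hf => ?_
  let fiber : Finset (Fin (Fintype.card V)) := {p | f (e p) = f (e i)}
  have fiber_ordConnected : (fiber : Set (Fin (Fintype.card V))).OrdConnected := by
    simpa [fiber, Set.preimage] using he (f (e i))
  have card_fiber : #fiber = #{v | f v = f (e i)} := card_equiv e (by simp [fiber])
  have hlt : (j : ℕ) < i + #fiber :=
    lt_add_card_of_ordConnected fiber_ordConnected (by simp [fiber]) (by simp [fiber, hf])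
  have := hbal (f (e i))
  omega

/-- **Lemma.** A complete multipartite graph in which every part `I_i` satisfies
`|I_i| < |V(G) \ I_i|` has an almost-perfect matching: a matching covering every
vertex except at most one. -/
theorem completeMultipartite_almostPerfectMatching {V : Type} [Fintype V] [DecidableEq V]
    (G : SimpleGraph V) (m : ℕ) (f : V → Fin m)
    (hmulti : ∀ u v, G.Adj u v ↔ f u ≠ f v)
    (hbal : ∀ i : Fin m, (Finset.univ.filter fun v => f v = i).card <
      (Finset.univ \ Finset.univ.filter fun v => f v = i).card) :
    ∃ M : Finset (Sym2 V), IsMatchingFinset G M ∧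
      ({v : V | ∀ e ∈ M, v ∉ e} : Set V).Subsingleton := by
  refine completeMultipartite_almostPerfectMatching_general G f (fun u v => (hmulti u v).mpr)
    fun i => ?_
  have := card_univ_sdiff {v | f v = i} ▸ hbal i
  omega
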